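/- Let F be an EUF formula containing m syntactically distinct function application terms. If F is valid over some nonempty domain D with |D| ≥ m, then F is universally valid. -/

import Mathlib

mutual
inductive EufTerm (Fn Pr : Type) : Type
  | app : Fn → List (EufTerm Fn Pr) → EufTerm Fn Pr
  | ite : EufFormula Fn Pr → EufTerm Fn Pr → EufTerm Fn Pr → EufTerm Fn Pr
inductive EufFormula (Fn Pr : Type) : Type
  | tt : EufFormula Fn Pr
  | ff : EufFormula Fn Pr
  | not : EufFormula Fn Pr → EufFormula Fn Pr
  | and : EufFormula Fn Pr → EufFormula Fn Pr → EufFormula Fn Pr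
  | or : EufFormula Fn Pr → EufFormula Fn Pr → EufFormula Fn Pr
  | eq : EufTerm Fn Pr → EufTerm Fn Pr → EufFormula Fn Pr
  | papp : Pr → List (EufTerm Fn Pr) → EufFormula Fn Pr
end

structure Interp (Fn Pr : Type) (D : Type u) where
  fn : Fn → List D → D
  pr : Pr → List D → Bool

open Classical in
mutual
noncomputable def evalT {Fn Pr : Type} {D : Type} (I : Interp Fn Pr D) : EufTerm Fn Pr → D
  | .app f args => I.fn f (args.attach.map (fun t => evalT I t.1))
  | .ite G T1 T2 => if evalF I G then evalT I T1 else evalT I T2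
termination_by t => sizeOf t
decreasing_by
  all_goals simp_wf
  all_goals try omega
  all_goals (have := List.sizeOf_lt_of_mem t.2; omega)
noncomputable def evalF {Fn Pr : Type} {D : Type} (I : Interp Fn Pr D) : EufFormula Fn Pr → Bool
  | .tt => true
  | .ff => false
  | .not G => !evalF I G
  | .and G1 G2 => evalF I G1 && evalF I G2
  | .or G1 G2 => evalF I G1 || evalF I G2
  | .eq T1 T2 => decide (evalT I T1 = evalT I T2)
  | .papp p args => I.pr p (args.attach.map (fun t => evalT I t.1))
termination_by g => sizeOf g
decreasing_by
  all_goals simp_wf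
  all_goals try omega
  all_goals (have := List.sizeOf_lt_of_mem t.2; omega)
end
def ValidOn {Fn Pr : Type} (F : EufFormula Fn Pr) (D : Type) : Prop :=
  ∀ I : Interp Fn Pr D, evalF I F = true

def UniversallyValid {Fn Pr : Type} (F : EufFormula Fn Pr) : Prop :=
  ∀ D : Type, Nonempty D → ValidOn F D

/-- Expressions: terms or formulas. -/
inductive EufExpr (Fn Pr : Type) : Type
  | t : EufTerm Fn Pr → EufExpr Fn Pr
  | f : EufFormula Fn Pr → EufExpr Fn Pr

/-- Immediate (proper) subexpression relation. -/
inductive ImmSub {Fn Pr : Type} : EufExpr Fn Pr → EufExpr Fn Pr → Prop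
  | appArg {g : Fn} {args : List (EufTerm Fn Pr)} {T : EufTerm Fn Pr} :
      T ∈ args → ImmSub (.t T) (.t (.app g args))
  | iteC {G : EufFormula Fn Pr} {T1 T2 : EufTerm Fn Pr} : ImmSub (.f G) (.t (.ite G T1 T2))
  | ite1 {G : EufFormula Fn Pr} {T1 T2 : EufTerm Fn Pr} : ImmSub (.t T1) (.t (.ite G T1 T2))
  | ite2 {G : EufFormula Fn Pr} {T1 T2 : EufTerm Fn Pr} : ImmSub (.t T2) (.t (.ite G T1 T2))
  | not {G : EufFormula Fn Pr} : ImmSub (.f G) (.f (.not G))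
  | andL {G1 G2 : EufFormula Fn Pr} : ImmSub (.f G1) (.f (.and G1 G2))
  | andR {G1 G2 : EufFormula Fn Pr} : ImmSub (.f G2) (.f (.and G1 G2))
  | orL {G1 G2 : EufFormula Fn Pr} : ImmSub (.f G1) (.f (.or G1 G2))
  | orR {G1 G2 : EufFormula Fn Pr} : ImmSub (.f G2) (.f (.or G1 G2))
  | eqL {T1 T2 : EufTerm Fn Pr} : ImmSub (.t T1) (.f (.eq T1 T2))
  | eqR {T1 T2 : EufTerm Fn Pr} : ImmSub (.t T2) (.f (.eq T1 T2))
  | pappArg {p : Pr} {args : List (EufTerm Fn Pr)} {T : EufTerm Fn Pr} :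
      T ∈ args → ImmSub (.t T) (.f (.papp p args))

/-- `SubExpr a b`: `a` occurs (as a subexpression) in `b`. -/
def SubExpr {Fn Pr : Type} (a b : EufExpr Fn Pr) : Prop := Relation.ReflTransGen ImmSub a b

def TermInT {Fn Pr : Type} (T S : EufTerm Fn Pr) : Prop := SubExpr (.t T) (.t S)
def TermInF {Fn Pr : Type} (T : EufTerm Fn Pr) (F : EufFormula Fn Pr) : Prop :=
  SubExpr (.t T) (.f F)
def FormulaInT {Fn Pr : Type} (G : EufFormula Fn Pr) (S : EufTerm Fn Pr) : Prop :=
  SubExpr (.f G) (.t S)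
def FormulaInF {Fn Pr : Type} (G F : EufFormula Fn Pr) : Prop := SubExpr (.f G) (.f F)

def IsAppTerm {Fn Pr : Type} : EufTerm Fn Pr → Prop
  | .app _ _ => True
  | _ => False

/-- `𝒯(F)`: the function application terms occurring in `F`. -/
def AppTermsF {Fn Pr : Type} (F : EufFormula Fn Pr) : Set (EufTerm Fn Pr) :=
  {T | IsAppTerm T ∧ TermInF T F}

/-- A function symbol occurs in `F` when some application of it occurs in `F`. -/
def FnInF {Fn Pr : Type} (g : Fn) (F : EufFormula Fn Pr) : Prop :=
  ∃ args, TermInF (EufTerm.app g args) F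

def PrInF {Fn Pr : Type} (p : Pr) (F : EufFormula Fn Pr) : Prop :=
  ∃ args, FormulaInF (EufFormula.papp p args) F

/-- `I` is diverse for `F` with respect to the set `Sg` of function symbols. -/
def DiverseFor {Fn Pr D : Type} (I : Interp Fn Pr D) (F : EufFormula Fn Pr)
    (Sg : Set Fn) : Prop :=
  ∀ (g : Fn) (args : List (EufTerm Fn Pr)), g ∈ Sg →
    TermInF (EufTerm.app g args) F →
    ∀ T2 ∈ AppTermsF F, evalT I (EufTerm.app g args) = evalT I T2 →
      ∃ args2, T2 = EufTerm.app g args2 ∧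
        List.Forall₂ (fun a b => evalT I a = evalT I b) args args2

mutual
/-- PEUF g-terms, where `isP` designates the p-function symbols. -/
inductive IsGTerm {Fn Pr : Type} (isP : Fn → Prop) : EufTerm Fn Pr → Prop
  | ite {G : EufFormula Fn Pr} {T1 T2 : EufTerm Fn Pr} :
      IsGFormula isP G → IsGTerm isP T1 → IsGTerm isP T2 → IsGTerm isP (.ite G T1 T2)
  | app {g : Fn} {args : List (EufTerm Fn Pr)} :
      ¬ isP g → (∀ T ∈ args, IsPTerm isP T) → IsGTerm isP (.app g args)
/-- PEUF p-terms. -/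
inductive IsPTerm {Fn Pr : Type} (isP : Fn → Prop) : EufTerm Fn Pr → Prop
  | g {T : EufTerm Fn Pr} : IsGTerm isP T → IsPTerm isP T
  | ite {G : EufFormula Fn Pr} {T1 T2 : EufTerm Fn Pr} :
      IsGFormula isP G → IsPTerm isP T1 → IsPTerm isP T2 → IsPTerm isP (.ite G T1 T2)
  | app {g : Fn} {args : List (EufTerm Fn Pr)} :
      isP g → (∀ T ∈ args, IsPTerm isP T) → IsPTerm isP (.app g args)
/-- PEUF g-formulas. -/
inductive IsGFormula {Fn Pr : Type} (isP : Fn → Prop) : EufFormula Fn Pr → Prop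
  | tt : IsGFormula isP .tt
  | ff : IsGFormula isP .ff
  | not {G : EufFormula Fn Pr} : IsGFormula isP G → IsGFormula isP (.not G)
  | and {G1 G2 : EufFormula Fn Pr} :
      IsGFormula isP G1 → IsGFormula isP G2 → IsGFormula isP (.and G1 G2)
  | or {G1 G2 : EufFormula Fn Pr} :
      IsGFormula isP G1 → IsGFormula isP G2 → IsGFormula isP (.or G1 G2)
  | eq {T1 T2 : EufTerm Fn Pr} :
      IsGTerm isP T1 → IsGTerm isP T2 → IsGFormula isP (.eq T1 T2)
  | papp {p : Pr} {args : List (EufTerm Fn Pr)} :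
      (∀ T ∈ args, IsPTerm isP T) → IsGFormula isP (.papp p args)
/-- PEUF p-formulas. -/
inductive IsPFormula {Fn Pr : Type} (isP : Fn → Prop) : EufFormula Fn Pr → Prop
  | g {G : EufFormula Fn Pr} : IsGFormula isP G → IsPFormula isP G
  | and {G1 G2 : EufFormula Fn Pr} :
      IsPFormula isP G1 → IsPFormula isP G2 → IsPFormula isP (.and G1 G2)
  | or {G1 G2 : EufFormula Fn Pr} :
      IsPFormula isP G1 → IsPFormula isP G2 → IsPFormula isP (.or G1 G2)
  | eq {T1 T2 : EufTerm Fn Pr} :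
      IsPTerm isP T1 → IsPTerm isP T2 → IsPFormula isP (.eq T1 T2)
end

/-- The p-function symbols occurring in `F`. -/
def PSymbolsIn {Fn Pr : Type} (isP : Fn → Prop) (F : EufFormula Fn Pr) : Set Fn :=
  {g | isP g ∧ FnInF g F}

/-- `I` is maximally diverse for the p-formula `F`. -/
def MaxDiverse {Fn Pr D : Type} (isP : Fn → Prop) (I : Interp Fn Pr D)
    (F : EufFormula Fn Pr) : Prop :=
  DiverseFor I F (PSymbolsIn isP F)

/-- `I'` refines `I` on the term set `Ts`. -/
def RefinesOn {Fn Pr D D' : Type} (I' : Interp Fn Pr D') (I : Interp Fn Pr D)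
    (Ts : Set (EufTerm Fn Pr)) : Prop :=
  ∀ T1 ∈ Ts, ∀ T2 ∈ Ts, evalT I' T1 = evalT I' T2 → evalT I T1 = evalT I T2

def ProperRefinesOn {Fn Pr D D' : Type} (I' : Interp Fn Pr D') (I : Interp Fn Pr D)
    (Ts : Set (EufTerm Fn Pr)) : Prop :=
  RefinesOn I' I Ts ∧
    ∃ T1 ∈ Ts, ∃ T2 ∈ Ts, evalT I T1 = evalT I T2 ∧ evalT I' T1 ≠ evalT I' T2

/-! A term of `F` takes, under any interpretation, the value of some function application term of
`F`: an `ITE` merely selects one of its branches. Evaluating `F` over a domain `D'` thus only sees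
the at most `m` values of these terms. If `|D| ≥ m`, a map `e : D' → D` that is injective on those
values has a left inverse `r` there, and transporting a would-be countermodel over `D'` along `e`
and `r` preserves every equation in `F`, hence yields a countermodel over `D`. -/

theorem finite_setOf_reflTransGen {α : Type*} {r : α → α → Prop} (hwf : WellFounded r)
    (hfin : ∀ b, {a | r a b}.Finite) (b : α) : {a | Relation.ReflTransGen r a b}.Finite := by
  induction b using hwf.induction with
  | _ b ih =>
    refine (((hfin b).biUnion ih).union (Set.finite_singleton b)).subset fun a hab => ?_
    rcases Relation.ReflTransGen.cases_tail hab with rfl | ⟨c, hac, hcb⟩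
    · exact Or.inr rfl
    · exact Or.inl (Set.mem_biUnion hcb hac)

section Subexpressions

variable {Fn Pr : Type}

theorem ImmSub.sizeOf_lt {a b : EufExpr Fn Pr} (h : ImmSub a b) : sizeOf a < sizeOf b := by
  cases h with
  | appArg hT | pappArg hT =>
    have hlt := List.sizeOf_lt_of_mem hT
    grind
  | _ => grind

theorem wellFounded_immSub : WellFounded (ImmSub (Fn := Fn) (Pr := Pr)) :=
  Subrelation.wf ImmSub.sizeOf_lt (measure sizeOf).wf

/-- The list of immediate subexpressions of an expression, witnessing that `ImmSub` is finitely
branching. -/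
def EufExpr.children : EufExpr Fn Pr → List (EufExpr Fn Pr)
  | .t (.app _ args) => args.map .t
  | .t (.ite G T₁ T₂) => [.f G, .t T₁, .t T₂]
  | .f .tt | .f .ff => []
  | .f (.not G) => [.f G]
  | .f (.and G₁ G₂) | .f (.or G₁ G₂) => [.f G₁, .f G₂]
  | .f (.eq T₁ T₂) => [.t T₁, .t T₂]
  | .f (.papp _ args) => args.map .t

theorem ImmSub.mem_children {a b : EufExpr Fn Pr} (h : ImmSub a b) : a ∈ b.children := by
  cases h with
  | appArg hT | pappArg hT => exact List.mem_map_of_mem hT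
  | _ => simp [EufExpr.children]

theorem finite_setOf_subExpr (b : EufExpr Fn Pr) : {a | SubExpr a b}.Finite :=
  finite_setOf_reflTransGen wellFounded_immSub
    (fun b => b.children.finite_toSet.subset fun _ h => h.mem_children) b

theorem finite_appTermsF (F : EufFormula Fn Pr) : (AppTermsF F).Finite :=
  ((finite_setOf_subExpr (.f F)).preimage fun _ _ _ _ => EufExpr.t.inj).subset fun _ hT => hT.2

theorem ImmSub.trans_subExpr {a b c : EufExpr Fn Pr} (hab : ImmSub a b) (hbc : SubExpr b c) :
    SubExpr a c :=
  Relation.ReflTransGen.head hab hbc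

end Subexpressions

section Evaluation

variable {Fn Pr D : Type} (I : Interp Fn Pr D)

theorem evalT_app (f : Fn) (args : List (EufTerm Fn Pr)) :
    evalT I (.app f args) = I.fn f (args.map (evalT I)) := by
  rw [evalT, List.attach_map_val]

theorem evalF_papp (p : Pr) (args : List (EufTerm Fn Pr)) :
    evalF I (.papp p args) = I.pr p (args.map (evalT I)) := by
  rw [evalF, List.attach_map_val]

theorem evalT_mem_image_appTermsF {F : EufFormula Fn Pr} :
    ∀ {T : EufTerm Fn Pr}, TermInF T F → evalT I T ∈ evalT I '' AppTermsF F
  | .app f args, hT => ⟨.app f args, ⟨trivial, hT⟩, rfl⟩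
  | .ite G T₁ T₂, hT => by
    rw [evalT]
    split
    · exact evalT_mem_image_appTermsF (ImmSub.ite1.trans_subExpr hT)
    · exact evalT_mem_image_appTermsF (ImmSub.ite2.trans_subExpr hT)

end Evaluation

section Transport

variable {Fn Pr : Type}

/-- The interpretation over `E` that reads its arguments back into `D` along `r`, applies `I`, and
sends the results to `E` along `e`. The maps are unrelated here; `I` is simulated faithfully on the
part of `D` where `r` is a left inverse of `e`. -/
def Interp.transport {D E : Type*} (I : Interp Fn Pr D) (e : D → E) (r : E → D) :
    Interp Fn Pr E where
  fn f xs := e (I.fn f (xs.map r))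
  pr p xs := I.pr p (xs.map r)

variable {D E : Type} {I : Interp Fn Pr D} {F : EufFormula Fn Pr} {e : D → E} {r : E → D}

theorem map_map_evalT_transport (hr : Set.LeftInvOn r e (evalT I '' AppTermsF F))
    {args : List (EufTerm Fn Pr)} (hF : ∀ T ∈ args, TermInF T F)
    (heval : ∀ T ∈ args, evalT (I.transport e r) T = e (evalT I T)) :
    (args.map (evalT (I.transport e r))).map r = args.map (evalT I) := by
  rw [List.map_map]
  refine List.map_congr_left fun T hT => ?_
  rw [Function.comp_apply, heval T hT, hr (evalT_mem_image_appTermsF I (hF T hT))]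

mutual

theorem evalT_transport (hr : Set.LeftInvOn r e (evalT I '' AppTermsF F)) :
    ∀ {T : EufTerm Fn Pr}, TermInF T F → evalT (I.transport e r) T = e (evalT I T)
  | .app f args, hT => by
    have hF (T) (hmem : T ∈ args) : TermInF T F := (ImmSub.appArg hmem).trans_subExpr hT
    have hargs := map_map_evalT_transport hr hF fun T hmem => evalT_transport hr (hF T hmem)
    rw [evalT_app, evalT_app, ← hargs, Interp.transport]
  | .ite G T₁ T₂, hT => by
    rw [evalT, evalT, evalF_transport hr (ImmSub.iteC.trans_subExpr hT),
      evalT_transport hr (ImmSub.ite1.trans_subExpr hT),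
      evalT_transport hr (ImmSub.ite2.trans_subExpr hT), apply_ite e]

theorem evalF_transport (hr : Set.LeftInvOn r e (evalT I '' AppTermsF F)) :
    ∀ {G : EufFormula Fn Pr}, FormulaInF G F → evalF (I.transport e r) G = evalF I G
  | .tt, _ => by rw [evalF, evalF]
  | .ff, _ => by rw [evalF, evalF]
  | .not G, hG => by rw [evalF, evalF, evalF_transport hr (ImmSub.not.trans_subExpr hG)]
  | .and G₁ G₂, hG => by
    rw [evalF, evalF, evalF_transport hr (ImmSub.andL.trans_subExpr hG),
      evalF_transport hr (ImmSub.andR.trans_subExpr hG)]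
  | .or G₁ G₂, hG => by
    rw [evalF, evalF, evalF_transport hr (ImmSub.orL.trans_subExpr hG),
      evalF_transport hr (ImmSub.orR.trans_subExpr hG)]
  | .eq T₁ T₂, hG => by
    have h₁ := ImmSub.eqL.trans_subExpr hG
    have h₂ := ImmSub.eqR.trans_subExpr hG
    rw [evalF, evalF, evalT_transport hr h₁, evalT_transport hr h₂, decide_eq_decide]
    exact hr.injOn.eq_iff (evalT_mem_image_appTermsF I h₁) (evalT_mem_image_appTermsF I h₂)
  | .papp p args, hG => by
    have hF (T) (hmem : T ∈ args) : TermInF T F := (ImmSub.pappArg hmem).trans_subExpr hG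
    have hargs := map_map_evalT_transport hr hF fun T hmem => evalT_transport hr (hF T hmem)
    rw [evalF_papp, evalF_papp, ← hargs, Interp.transport]

end

theorem exists_interp_evalF_eq [Nonempty D] [Nonempty E]
    (hcard : (evalT I '' AppTermsF F).encard ≤ ENat.card E) :
    ∃ J : Interp Fn Pr E, evalF J F = evalF I F := by
  rw [← Set.encard_univ] at hcard
  obtain ⟨e, -, he⟩ := ((finite_appTermsF F).image (evalT I)).exists_injOn_of_encard_le hcard
  exact ⟨I.transport e (Function.invFunOn e _),
    evalF_transport he.leftInvOn_invFunOn Relation.ReflTransGen.refl⟩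

end Transport

/-- **Statement 19.** If `F` contains `m` syntactically distinct function application terms
and is valid over a nonempty domain of cardinality at least `m`, then `F` is universally
valid. -/
theorem valid_large_domain {Fn Pr : Type} (F : EufFormula Fn Pr) (m : ℕ)
    (hm : (AppTermsF F).ncard = m) (D : Type) (hD : Nonempty D)
    (hcard : (m : Cardinal) ≤ Cardinal.mk D) (hvalid : ValidOn F D) :
    UniversallyValid F := by
  intro D' hD' I
  have hvalues : (evalT I '' AppTermsF F).encard ≤ ENat.card D :=
    calc (evalT I '' AppTermsF F).encard
      _ ≤ (AppTermsF F).encard := Set.encard_image_le _ _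
      _ = m := by rw [← (finite_appTermsF F).cast_ncard_eq, hm]
      _ ≤ ENat.card D := Cardinal.natCast_le_toENat.mpr hcard
  obtain ⟨J, hJ⟩ := exists_interp_evalF_eq hvalues
  exact hJ.symm.trans (hvalid J)
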